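/- arXiv:2511.19138 — 2 statements merged into one kernel-verified Lean document; each statement's English description precedes it below -/
import Mathlib

section
/- Let H be a graph with a cut vertex v whose removal results in the disjoint union of two (possibly disconnected) subgraphs H' and H''. Suppose D is a divisor on H of rank r such that the divisor D|_{H'} - v has rank -1 as a divisor on the subgraph H' ∪ {v}. Then D|_{H'' ∪ {v}} has rank at least r as a divisor on the subgraph H'' ∪ {v}. -/
open Finset

variable {V : Type*} [Fintype V] [DecidableEq V]

/-- A finite loopless multigraph on vertex type `V`, given by symmetric edge multiplicities. -/
structure Multigraph (V : Type*) [Fintype V] [DecidableEq V] where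
  mult : V → V → ℕ
  symm : ∀ u v, mult u v = mult v u
  loopless : ∀ v, mult v v = 0

namespace Multigraph

def Adj (G : Multigraph V) (u v : V) : Prop := 0 < G.mult u v

/-- A graph is connected. -/
def Connected (G : Multigraph V) : Prop :=
  Nonempty V ∧ ∀ u v : V, Relation.ReflTransGen G.Adj u v

/-- Valence of a vertex. -/
def valence (G : Multigraph V) (v : V) : ℕ := ∑ u, G.mult v u

/-- The Laplacian applied to an integer-valued function on the vertices. -/
def laplacian (G : Multigraph V) (f : V → ℤ) : V → ℤ :=
  fun w => ∑ u, (G.mult w u : ℤ) * (f w - f u)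

/-- Degree of a divisor. -/
def degree (D : V → ℤ) : ℤ := ∑ v, D v

/-- A divisor is effective if all coefficients are nonnegative. -/
def Effective (D : V → ℤ) : Prop := ∀ v, 0 ≤ D v

/-- Linear equivalence of divisors: they differ by a sequence of chip-firing moves,
equivalently by a Laplacian of an integer function. -/
def LinEquiv (G : Multigraph V) (D D' : V → ℤ) : Prop :=
  ∃ f : V → ℤ, D' = D - G.laplacian f

/-- A divisor is winnable if it is linearly equivalent to an effective divisor. -/
def Winnable (G : Multigraph V) (D : V → ℤ) : Prop :=
  ∃ E : V → ℤ, Effective E ∧ G.LinEquiv D E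

/-- The Baker–Norine rank of a divisor: the largest `r` such that `D - E` is winnable for
every effective divisor `E` of degree `r` (the defining set contains all negative integers,
and its supremum is `-1` precisely when `D` itself is not winnable). -/
noncomputable def rank (G : Multigraph V) (D : V → ℤ) : ℤ :=
  sSup {r : ℤ | ∀ E : V → ℤ, Effective E → degree E = r → G.Winnable (fun w => D w - E w)}

/-- The `k`-th gonality of a graph: the smallest degree of a divisor of rank `k`. -/
noncomputable def gonality (G : Multigraph V) (k : ℤ) : ℤ :=
  sInf {d : ℤ | ∃ D : V → ℤ, G.rank D = k ∧ degree D = d}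

/-- A graph is gonality-tight if its second gonality exceeds its first by exactly 1. -/
def GonalityTight (G : Multigraph V) : Prop :=
  G.gonality 2 = G.gonality 1 + 1

/-- A divisor realises the `k`-th gonality if it has rank `k` and degree `gon_k(G)`. -/
def Realises (G : Multigraph V) (k : ℤ) (D : V → ℤ) : Prop :=
  G.rank D = k ∧ degree D = G.gonality k

/-- A divisor is `v`-reduced: nonnegative away from `v`, and set-firing any nonempty set of
vertices not containing `v` creates a negative coefficient inside the set. -/
def Reduced (G : Multigraph V) (v : V) (D : V → ℤ) : Prop :=
  (∀ w, w ≠ v → 0 ≤ D w) ∧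
    ∀ U : Finset V, U.Nonempty → v ∉ U →
      ∃ w ∈ U, D w - ∑ u ∈ Uᶜ, (G.mult w u : ℤ) < 0

/-- The genus (first Betti number) of a graph: `|E| - |V| + 1`. -/
def genus (G : Multigraph V) : ℤ :=
  ((∑ u, ∑ v, G.mult u v : ℕ) : ℤ) / 2 - Fintype.card V + 1

/-- The canonical divisor of a graph. -/
def canonical (G : Multigraph V) : V → ℤ :=
  fun w => (G.valence w : ℤ) - 2

/-- The subgraph induced on a set `S` of vertices (with all edges among `S`). -/
def induce (G : Multigraph V) (S : Finset V) : Multigraph {x // x ∈ S} where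
  mult a b := G.mult a b
  symm a b := G.symm a b
  loopless a := G.loopless a

/-- `G.SeparatedBy u w v` means every path from `w` to `v` passes through `u`. -/
def SeparatedBy (G : Multigraph V) (u w v : V) : Prop :=
  ¬ Relation.ReflTransGen (fun x y => G.Adj x y ∧ x ≠ u ∧ y ≠ u) w v

end Multigraph

/-- Size of the `i`-th level of a quasi-banana graph: level `0` has a single vertex. -/
def qbSize (q : ℕ → ℕ) (i : ℕ) : ℕ := if i = 0 then 1 else q i

/-- `ℓ` is a quasi-banana labelling of `G` exhibiting `G ≅ QB_m(q_1, …, q_m)`: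
`ℓ` is a bijection onto the pairs `(i, j)` with `i ≤ m`, `1 ≤ j ≤ qbSize q i`
(vertex `u_{i,j}` is the vertex labelled `(i,j)`), and the edge multiplicities are:
one edge between distinct vertices of the same level, `(∑_{k=1}^{i} q_k) + 2` edges
between `u_{i,1}` and each `u_{i+1,j}`, and no other edges. -/
def Multigraph.IsQBLabelling (G : Multigraph V) (m : ℕ) (q : ℕ → ℕ) (ℓ : V → ℕ × ℕ) : Prop :=
  (∀ i, 1 ≤ i → i ≤ m → 0 < q i) ∧
  Function.Injective ℓ ∧
  (∀ v : V, (ℓ v).1 ≤ m ∧ 1 ≤ (ℓ v).2 ∧ (ℓ v).2 ≤ qbSize q (ℓ v).1) ∧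
  (∀ i j : ℕ, i ≤ m → 1 ≤ j → j ≤ qbSize q i → ∃ v, ℓ v = (i, j)) ∧
  (∀ v w : V, v ≠ w → G.mult v w =
    if (ℓ v).1 = (ℓ w).1 then 1
    else if (ℓ v).1 + 1 = (ℓ w).1 ∧ (ℓ v).2 = 1 then (∑ i ∈ Finset.Icc 1 (ℓ v).1, q i) + 2
    else if (ℓ w).1 + 1 = (ℓ v).1 ∧ (ℓ w).2 = 1 then (∑ i ∈ Finset.Icc 1 (ℓ w).1, q i) + 2
    else 0)

/-- A graph is a quasi-banana graph if it is isomorphic to some `QB_m(N)`. -/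
def Multigraph.IsQuasiBanana (G : Multigraph V) : Prop :=
  ∃ (m : ℕ) (q : ℕ → ℕ) (ℓ : V → ℕ × ℕ), G.IsQBLabelling m q ℓ

/-- The graph obtained from `G'` by attaching a complete graph `K_n`: `n` new vertices
pairwise joined by exactly one edge, each joined to `v` by exactly `k+1` edges. -/
def attachComplete (G' : Multigraph V) (v : V) (k n : ℕ) : Multigraph (V ⊕ Fin n) where
  mult x y :=
    match x, y with
    | Sum.inl a, Sum.inl b => G'.mult a b
    | Sum.inl a, Sum.inr _ => if a = v then k + 1 else 0
    | Sum.inr _, Sum.inl b => if b = v then k + 1 else 0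
    | Sum.inr i, Sum.inr j => if i = j then 0 else 1
  symm := by
    rintro (a | i) (b | j)
    · exact G'.symm a b
    · rfl
    · rfl
    · by_cases h : i = j
      · simp [h]
      · simp [h, Ne.symm h]
  loopless := by
    rintro (a | i)
    · exact G'.loopless a
    · simp

/-!
Let `f` be a firing script that makes `D` effective on the whole graph, and let `c` be the net
number of chips which `v` sends through `f` into `H'`. Restricted to `H' ∪ {v}` or `H'' ∪ {v}`, the
script `f` acts as before at every vertex except `v`. If `c < 0`, then on `H' ∪ {v}` the vertex `v`
ends out of debt even when it starts from `-1`, so `f` wins `D|_{H'} - v`. If `0 ≤ c`, then on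
`H'' ∪ {v}` the vertex `v` ends with at least as many chips as before, so `f` wins
`D|_{H'' ∪ {v}}`. The rank inequality is this dichotomy applied to `D - E` for all effective
divisors `E` supported on `H'' ∪ {v}`.
-/

namespace Multigraph

section Divisor

variable {ι : Type*}

theorem effective_single [DecidableEq ι] (v : ι) {k : ℤ} (hk : 0 ≤ k) :
    Effective (Pi.single v k) :=
  (Pi.single_nonneg.2 hk : (0 : ι → ℤ) ≤ Pi.single v k)

theorem Effective.extend {S : Finset ι} {E : S → ℤ} (hE : Effective E) :
    Effective (Function.extend Subtype.val E 0) := fun x => by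
  by_cases hx : x ∈ S
  · rw [Function.extend_val_apply hx]
    exact hE ⟨x, hx⟩
  · rw [Function.extend_val_apply' hx, Pi.zero_apply]

variable [Fintype ι]

theorem Effective.degree_nonneg {E : ι → ℤ} (hE : Effective E) : 0 ≤ degree E :=
  Finset.sum_nonneg fun v _ => hE v

theorem Effective.degree_eq_zero_iff {E : ι → ℤ} (hE : Effective E) : degree E = 0 ↔ E = 0 :=
  Fintype.sum_eq_zero_iff_of_nonneg hE

theorem degree_add (D E : ι → ℤ) : degree (D + E) = degree D + degree E :=
  Finset.sum_add_distrib

theorem degree_sub (D E : ι → ℤ) : degree (D - E) = degree D - degree E :=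
  Finset.sum_sub_distrib D E

theorem degree_single [DecidableEq ι] (v : ι) (k : ℤ) : degree (Pi.single v k) = k :=
  Fintype.sum_pi_single' v k

theorem degree_extend {S : Finset ι} (E : S → ℤ) :
    degree (Function.extend Subtype.val E 0) = degree E := by
  rw [degree, degree, Finset.sum_eq_sum_extend]
  refine (Finset.sum_subset (subset_univ S) fun x _ hx => ?_).symm
  rw [Function.extend_val_apply' hx, Pi.zero_apply]

end Divisor

theorem degree_laplacian (G : Multigraph V) (f : V → ℤ) : degree (G.laplacian f) = 0 := by
  have swap : ∑ w, ∑ u, (G.mult w u : ℤ) * f u = ∑ w, ∑ u, (G.mult w u : ℤ) * f w := by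
    rw [Finset.sum_comm]
    simp only [G.symm]
  simp only [degree, laplacian, mul_sub, Finset.sum_sub_distrib, swap, sub_self]

theorem winnable_iff_exists_laplacian_le {G : Multigraph V} {D : V → ℤ} :
    G.Winnable D ↔ ∃ f, G.laplacian f ≤ D := by
  constructor
  · rintro ⟨_, hE, f, rfl⟩
    exact ⟨f, sub_nonneg.1 hE⟩
  · rintro ⟨f, hf⟩
    exact ⟨D - G.laplacian f, sub_nonneg.2 hf, f, rfl⟩

theorem Winnable.mono {G : Multigraph V} {D D' : V → ℤ} (hD : G.Winnable D) (h : D ≤ D') :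
    G.Winnable D' := by
  rw [winnable_iff_exists_laplacian_le] at hD ⊢
  exact hD.imp fun f hf => hf.trans h

theorem Winnable.degree_nonneg {G : Multigraph V} {D : V → ℤ} (hD : G.Winnable D) :
    0 ≤ degree D := by
  obtain ⟨f, hf⟩ := winnable_iff_exists_laplacian_le.1 hD
  exact (G.degree_laplacian f).ge.trans (Finset.sum_le_sum fun v _ => hf v)

section Rank

variable [Nonempty V] {G : Multigraph V} {D : V → ℤ} {r : ℤ}

theorem le_max_degree_of_forall_winnable_sub
    (h : ∀ E, Effective E → degree E = r → G.Winnable (D - E)) : r ≤ max 0 (degree D) := by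
  obtain ⟨v⟩ := ‹Nonempty V›
  rcases le_total r 0 with hr | hr
  · exact le_max_of_le_left hr
  · have hdeg := (h _ (effective_single v hr) (degree_single v r)).degree_nonneg
    rw [degree_sub, degree_single] at hdeg
    exact le_max_of_le_right (sub_nonneg.1 hdeg)

theorem isGreatest_rank (G : Multigraph V) (D : V → ℤ) :
    IsGreatest {r | ∀ E, Effective E → degree E = r → G.Winnable (D - E)} (G.rank D) := by
  have hbdd : BddAbove {r | ∀ E, Effective E → degree E = r → G.Winnable (D - E)} :=
    ⟨_, fun _ => le_max_degree_of_forall_winnable_sub⟩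
  refine ⟨Int.csSup_mem ⟨-1, fun E hE hdeg => ?_⟩ hbdd, fun _ hr => le_csSup hbdd hr⟩
  exact absurd (hdeg ▸ hE.degree_nonneg) (by decide)

theorem le_rank_iff : r ≤ G.rank D ↔ ∀ E, Effective E → degree E = r → G.Winnable (D - E) := by
  refine ⟨fun hr E hE hdeg => ?_, fun h => (isGreatest_rank G D).2 h⟩
  obtain ⟨v⟩ := ‹Nonempty V›
  have hpad : Effective (Pi.single v (G.rank D - r)) := effective_single v (sub_nonneg.2 hr)
  refine ((isGreatest_rank G D).1 (E + Pi.single v (G.rank D - r))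
    (fun w => add_nonneg (hE w) (hpad w)) ?_).mono (sub_le_sub_left (le_add_of_nonneg_right hpad) D)
  rw [degree_add, degree_single, hdeg, add_sub_cancel]

theorem zero_le_rank_iff : 0 ≤ G.rank D ↔ G.Winnable D := by
  rw [le_rank_iff]
  refine ⟨fun h => ?_, fun h E hE hdeg => ?_⟩
  · simpa using h 0 (fun _ => le_rfl) Finset.sum_const_zero
  · rwa [hE.degree_eq_zero_iff.1 hdeg, sub_zero]

end Rank

theorem laplacian_induce_restrict (G : Multigraph V) (S : Finset V) (f : V → ℤ) (x : S) :
    (G.induce S).laplacian (S.restrict f) x = ∑ u ∈ S, (G.mult x u : ℤ) * (f x - f u) :=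
  Finset.sum_coe_sort S fun u => (G.mult x u : ℤ) * (f x - f u)

/-- `G` is the one-vertex sum of its subgraphs induced on `S` and `T`: together they cover `G`, they
share exactly the vertex `v`, and every edge of `G` lies in one of them. For a cut vertex `v` whose
removal leaves the vertex sets `A` and `B`, the two sides are `insert v A` and `insert v B`. -/
structure IsVertexSum (G : Multigraph V) (v : V) (S T : Finset V) : Prop where
  union_eq : S ∪ T = univ
  inter_eq : S ∩ T = {v}
  mult_eq_zero : ∀ s ∈ S, ∀ t ∈ T, s ≠ v → t ≠ v → G.mult s t = 0

namespace IsVertexSum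

variable {G : Multigraph V} {v x : V} {S T : Finset V}

theorem symm (h : G.IsVertexSum v S T) : G.IsVertexSum v T S where
  union_eq := union_comm S T ▸ h.union_eq
  inter_eq := inter_comm S T ▸ h.inter_eq
  mult_eq_zero t ht s hs htv hsv := G.symm s t ▸ h.mult_eq_zero s hs t ht hsv htv

theorem mem_left (h : G.IsVertexSum v S T) : v ∈ S :=
  (mem_inter.1 (h.inter_eq ▸ mem_singleton_self v)).1

theorem mem_right (h : G.IsVertexSum v S T) : v ∈ T :=
  h.symm.mem_left

theorem mem_right_of_notMem_left (h : G.IsVertexSum v S T) (hx : x ∉ S) : x ∈ T :=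
  (mem_union.1 (h.union_eq ▸ mem_univ x)).resolve_left hx

theorem notMem_right_of_mem_left (h : G.IsVertexSum v S T) (hx : x ∈ S) (hxv : x ≠ v) : x ∉ T :=
  fun hxT => hxv (mem_singleton.1 (h.inter_eq ▸ mem_inter.2 ⟨hx, hxT⟩))

theorem laplacian_induce_left (h : G.IsVertexSum v S T) (f : V → ℤ) (x : S) (hxv : x.1 ≠ v) :
    (G.induce S).laplacian (S.restrict f) x = G.laplacian f x := by
  rw [laplacian_induce_restrict]
  refine Finset.sum_subset (subset_univ S) fun u _ huS => ?_
  have huv : u ≠ v := fun huv => huS (huv ▸ h.mem_left)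
  rw [h.mult_eq_zero x x.2 u (h.mem_right_of_notMem_left huS) hxv huv, Nat.cast_zero, zero_mul]

theorem laplacian_induce_add (h : G.IsVertexSum v S T) (f : V → ℤ) :
    (G.induce S).laplacian (S.restrict f) ⟨v, h.mem_left⟩ +
      (G.induce T).laplacian (T.restrict f) ⟨v, h.mem_right⟩ = G.laplacian f v := by
  rw [laplacian_induce_restrict, laplacian_induce_restrict, ← Finset.sum_union_inter, h.union_eq,
    h.inter_eq, Finset.sum_singleton, sub_self, mul_zero, add_zero, laplacian]

theorem winnable_left_or_winnable_right (h : G.IsVertexSum v S T) {D : V → ℤ}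
    (hD : G.Winnable D) :
    (G.induce S).Winnable (S.restrict (Function.update D v (-1))) ∨
      (G.induce T).Winnable (T.restrict D) := by
  simp only [winnable_iff_exists_laplacian_le] at hD ⊢
  obtain ⟨f, hf⟩ := hD
  have hv := (h.laplacian_induce_add f).trans_le (hf v)
  rcases lt_or_ge ((G.induce S).laplacian (S.restrict f) ⟨v, h.mem_left⟩) 0 with hneg | hnonneg
  · refine Or.inl ⟨S.restrict f, fun x => ?_⟩
    rcases eq_or_ne x ⟨v, h.mem_left⟩ with rfl | hxv
    · simpa using Int.le_sub_one_of_lt hneg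
    · have hxv' : x.1 ≠ v := fun hx => hxv (Subtype.ext hx)
      simpa [h.laplacian_induce_left f x hxv', hxv'] using hf x
  · refine Or.inr ⟨T.restrict f, fun x => ?_⟩
    rcases eq_or_ne x ⟨v, h.mem_right⟩ with rfl | hxv
    · exact (le_add_of_nonneg_left hnonneg).trans hv
    · exact (h.symm.laplacian_induce_left f x fun hx => hxv (Subtype.ext hx)).trans_le (hf x)

end IsVertexSum

theorem IsVertexSum.rank_le_rank_induce_right {G : Multigraph V} {v : V} {S T : Finset V}
    (h : G.IsVertexSum v S T) {D : V → ℤ}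
    (hD : ¬ (G.induce S).Winnable (S.restrict (Function.update D v (-1)))) :
    G.rank D ≤ (G.induce T).rank (T.restrict D) := by
  have : Nonempty V := ⟨v⟩
  have : Nonempty T := ⟨v, h.mem_right⟩
  refine le_rank_iff.2 fun E hE hdeg => ?_
  let F : V → ℤ := Function.extend Subtype.val E 0
  have hwin : G.Winnable (D - F) :=
    le_rank_iff.1 le_rfl F hE.extend ((degree_extend E).trans hdeg)
  have hleft : S.restrict (Function.update (D - F) v (-1)) =
      S.restrict (Function.update D v (-1)) := by
    ext x
    rcases eq_or_ne x.1 v with hxv | hxv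
    · simp [hxv]
    · have hFx : F x = 0 := Function.extend_val_apply' (h.notMem_right_of_mem_left x.2 hxv)
      simp [hxv, hFx]
  have hright : T.restrict (D - F) = T.restrict D - E :=
    funext fun x => congrArg (D x - ·) (Subtype.val_injective.extend_apply E 0 x)
  rw [← hright]
  exact (h.winnable_left_or_winnable_right hwin).resolve_left (hleft ▸ hD)

theorem isVertexSum_insert {G : Multigraph V} {v : V} {A B : Finset V}
    (hAB : A ∪ B = univ.erase v) (hdisj : Disjoint A B)
    (hnoedge : ∀ a ∈ A, ∀ b ∈ B, G.mult a b = 0) :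
    G.IsVertexSum v (insert v A) (insert v B) where
  union_eq := by rw [← insert_union_distrib, hAB, insert_erase (mem_univ v)]
  inter_eq := by rw [← insert_inter_distrib, disjoint_iff_inter_eq_empty.1 hdisj]; rfl
  mult_eq_zero a ha b hb hav hbv :=
    hnoedge a (mem_of_mem_insert_of_ne ha hav) b (mem_of_mem_insert_of_ne hb hbv)

end Multigraph

theorem stmt7_general (H : Multigraph V) (v : V) (A B : Finset V)
    (hAB : A ∪ B = Finset.univ.erase v) (hdisj : Disjoint A B)
    (hnoedge : ∀ a ∈ A, ∀ b ∈ B, H.mult a b = 0) (D : V → ℤ)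
    (hA : (H.induce (insert v A)).rank (fun x => if x.1 = v then -1 else D x.1) = -1) :
    H.rank D ≤ (H.induce (insert v B)).rank (fun x => D x.1) := by
  have hsum := Multigraph.isVertexSum_insert hAB hdisj hnoedge
  have : Nonempty {x // x ∈ insert v A} := ⟨v, hsum.mem_left⟩
  refine hsum.rank_le_rank_induce_right fun hwin => ?_
  have hrestrict : (insert v A).restrict (Function.update D v (-1)) =
      fun x => if x.1 = v then -1 else D x.1 :=
    funext fun x => Function.update_apply D v (-1) x
  rw [hrestrict, ← Multigraph.zero_le_rank_iff, hA] at hwin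
  exact absurd hwin (by decide)

/-- If `v` is a cut vertex whose removal splits `H` into `H'` (vertex set
`A`) and `H''` (vertex set `B`), `D` has rank `r` on `H`, and `D|_{H'} - v` has rank `-1`
on `H' ∪ {v}`, then `D|_{H'' ∪ {v}}` has rank at least `r` on `H'' ∪ {v}`. -/
theorem stmt7 (H : Multigraph V) (hH : H.Connected)
    (v : V) (A B : Finset V)
    (hAB : A ∪ B = Finset.univ.erase v) (hdisj : Disjoint A B)
    (hnoedge : ∀ a ∈ A, ∀ b ∈ B, H.mult a b = 0)
    (D : V → ℤ) (r : ℤ) (hr : H.rank D = r)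
    (hA : (H.induce (insert v A)).rank
        (fun x => if x.1 = v then -1 else D x.1) = -1) :
    r ≤ (H.induce (insert v B)).rank (fun x => D x.1) := by
  rw [← hr]
  exact stmt7_general H v A B hAB hdisj hnoedge D hA
end

section
/- Let G' be a graph with a vertex v, let k ≥ 0 and n ≥ 1 be integers, and let G be the graph obtained from G' by attaching a complete graph K_n: add n new vertices pairwise joined by exactly one edge, and join v to each of the n new vertices by exactly k+1 edges. Let D_2 = (k+1)·v + Σ_{w∈V(K_n)} w. Then: (1) for every vertex u of K_n, D_2 is linearly equivalent on G to (k+n+1)·u; (2) (k+1)·D_2 is linearly equivalent on G to (k+n+1)(k+1)·v. -/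
open Finset

variable {V : Type*} [Fintype V] [DecidableEq V]

/-! Both equivalences are single set-firing moves. Firing `u` once on `(k+n+1)·u` sends `k+1` chips
to `v` and one to each other vertex of `K_n`, leaving one chip on `u`. Firing all of `K_n` once on
`(k+1)·D₂` moves every chip on `K_n` to `v`. -/

namespace Multigraph

/-- The divisor obtained from `D` by firing every vertex of `S` once. The chips sent along edges
inside `S` cancel, so only the edges leaving `S` appear. -/
def fireSet (G : Multigraph V) (S : Finset V) (D : V → ℤ) : V → ℤ :=
  fun w => if w ∈ S then D w - ∑ u ∈ Sᶜ, (G.mult w u : ℤ) else D w + ∑ u ∈ S, (G.mult w u : ℤ)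

theorem laplacian_neg (G : Multigraph V) (f : V → ℤ) : G.laplacian (-f) = -G.laplacian f := by
  funext w
  simp only [laplacian, Pi.neg_apply, ← Finset.sum_neg_distrib]
  exact Finset.sum_congr rfl fun u _ => by ring

theorem LinEquiv.symm {G : Multigraph V} {D D' : V → ℤ} (h : G.LinEquiv D D') :
    G.LinEquiv D' D := by
  obtain ⟨f, rfl⟩ := h
  exact ⟨-f, by rw [laplacian_neg]; abel⟩

theorem fireSet_eq_sub_laplacian (G : Multigraph V) (S : Finset V) (D : V → ℤ) :
    G.fireSet S D = D - G.laplacian (fun w => if w ∈ S then 1 else 0) := by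
  funext w
  rw [fireSet, Pi.sub_apply, laplacian, ← Finset.sum_add_sum_compl S]
  have sum_inside (c : ℤ) : ∑ u ∈ S, (G.mult w u : ℤ) * (c - if u ∈ S then 1 else 0) =
      (∑ u ∈ S, (G.mult w u : ℤ)) * (c - 1) := by
    rw [Finset.sum_mul]
    exact Finset.sum_congr rfl fun u hu => by rw [if_pos hu]
  have sum_outside (c : ℤ) : ∑ u ∈ Sᶜ, (G.mult w u : ℤ) * (c - if u ∈ S then 1 else 0) =
      (∑ u ∈ Sᶜ, (G.mult w u : ℤ)) * c := by
    rw [Finset.sum_mul]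
    exact Finset.sum_congr rfl fun u hu => by rw [if_neg (Finset.mem_compl.mp hu), sub_zero]
  rw [sum_inside, sum_outside]
  split_ifs <;> ring

theorem linEquiv_fireSet (G : Multigraph V) (S : Finset V) (D : V → ℤ) :
    G.LinEquiv D (G.fireSet S D) :=
  ⟨_, G.fireSet_eq_sub_laplacian S D⟩

theorem sum_mult_compl_singleton (G : Multigraph V) (v : V) :
    ∑ u ∈ {v}ᶜ, G.mult v u = G.valence v := by
  rw [valence, ← Finset.sum_add_sum_compl {v}, Finset.sum_singleton, G.loopless, zero_add]

theorem fireSet_singleton (G : Multigraph V) (v : V) (D : V → ℤ) :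
    G.fireSet {v} D = fun w => if w = v then D v - G.valence v else D w + G.mult w v := by
  funext w
  simp only [fireSet, Finset.mem_singleton, Finset.sum_singleton]
  split_ifs with h
  · rw [h, ← sum_mult_compl_singleton, Nat.cast_sum]
  · rfl

end Multigraph

namespace attachComplete

/-- The divisor `D₂ = (k+1)·v + ∑_{w ∈ K_n} w` on `attachComplete G' v k n`. -/
def cliqueDivisor (v : V) (k n : ℕ) : V ⊕ Fin n → ℤ :=
  Sum.elim (fun a => if a = v then (k : ℤ) + 1 else 0) (fun _ => 1)

/-- The vertices of the attached `K_n`. -/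
def clique (α : Type*) (n : ℕ) : Finset (α ⊕ Fin n) :=
  univ.map Function.Embedding.inr

theorem mem_clique {α : Type*} {n : ℕ} {w : α ⊕ Fin n} : w ∈ clique α n ↔ w.isRight := by
  cases w <;> simp [clique]

theorem compl_clique (α : Type*) [Fintype α] [DecidableEq α] (n : ℕ) :
    (clique α n)ᶜ = univ.map Function.Embedding.inl := by
  ext w
  cases w <;> simp [clique]

variable (G' : Multigraph V) (v : V) (k n : ℕ)

@[simp]
theorem mult_inl_inr (a : V) (i : Fin n) :
    (attachComplete G' v k n).mult (.inl a) (.inr i) = if a = v then k + 1 else 0 := rfl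

@[simp]
theorem mult_inr_inl (i : Fin n) (a : V) :
    (attachComplete G' v k n).mult (.inr i) (.inl a) = if a = v then k + 1 else 0 := rfl

@[simp]
theorem mult_inr_inr (i j : Fin n) :
    (attachComplete G' v k n).mult (.inr i) (.inr j) = if i = j then 0 else 1 := rfl

theorem valence_inr (i : Fin n) : (attachComplete G' v k n).valence (.inr i) = k + n := by
  have sum_clique : ∑ j : Fin n, (if i = j then 0 else 1) = n - 1 := by
    simp [Finset.sum_ite, Finset.filter_ne]
  have := i.pos
  simp only [Multigraph.valence, Fintype.sum_sum_type, mult_inr_inl, mult_inr_inr,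
    Fintype.sum_ite_eq', sum_clique]
  omega

theorem sum_mult_inl_clique (a : V) :
    ∑ u ∈ clique V n, (attachComplete G' v k n).mult (.inl a) u =
      if a = v then n * (k + 1) else 0 := by
  simp [clique]

theorem sum_mult_inr_compl_clique (i : Fin n) :
    ∑ u ∈ (clique V n)ᶜ, (attachComplete G' v k n).mult (.inr i) u = k + 1 := by
  simp [compl_clique]

theorem fireSet_inr_eq_cliqueDivisor (u : Fin n) :
    (attachComplete G' v k n).fireSet {.inr u}
      (fun w => if w = .inr u then (k : ℤ) + n + 1 else 0) = cliqueDivisor v k n := by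
  rw [Multigraph.fireSet_singleton, valence_inr]
  funext w
  rcases w with a | i
  · simp [cliqueDivisor]
  · by_cases h : i = u <;> simp [cliqueDivisor, h]

theorem fireSet_clique_mul_cliqueDivisor :
    (attachComplete G' v k n).fireSet (clique V n)
        (fun w => ((k : ℤ) + 1) * cliqueDivisor v k n w) =
      fun w => if w = .inl v then ((k : ℤ) + n + 1) * ((k : ℤ) + 1) else 0 := by
  funext w
  rw [Multigraph.fireSet]
  rcases w with a | i
  · rw [if_neg (by simp [mem_clique]), ← Nat.cast_sum, sum_mult_inl_clique]
    simp only [cliqueDivisor, Sum.elim_inl, Sum.inl.injEq]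
    split_ifs <;> push_cast <;> ring
  · rw [if_pos (by simp [mem_clique]), ← Nat.cast_sum, sum_mult_inr_compl_clique]
    simp [cliqueDivisor]

end attachComplete

open attachComplete in
theorem stmt12_general (G' : Multigraph V) (v : V) (k n : ℕ) :
    (∀ u : Fin n,
      (attachComplete G' v k n).LinEquiv (cliqueDivisor v k n)
        (fun w => if w = .inr u then (k : ℤ) + n + 1 else 0)) ∧
    (attachComplete G' v k n).LinEquiv (fun w => ((k : ℤ) + 1) * cliqueDivisor v k n w)
      (fun w => if w = .inl v then ((k : ℤ) + n + 1) * ((k : ℤ) + 1) else 0) :=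
  ⟨fun u => (fireSet_inr_eq_cliqueDivisor G' v k n u ▸ Multigraph.linEquiv_fireSet _ _ _).symm,
    fireSet_clique_mul_cliqueDivisor G' v k n ▸ Multigraph.linEquiv_fireSet _ _ _⟩

/-- For `G` obtained from `G'` by attaching `K_n` to `v` along `k+1`
edges, and `D₂ = (k+1)·v + ∑_{w ∈ K_n} w`: (1) `D₂ ∼ (k+n+1)·u` for every `u ∈ K_n`;
(2) `(k+1)·D₂ ∼ (k+n+1)(k+1)·v`. -/
theorem stmt12 (G' : Multigraph V) (hG' : G'.Connected)
    (v : V) (k n : ℕ) (hn : 1 ≤ n) :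
    (∀ u : Fin n,
      (attachComplete G' v k n).LinEquiv
        (Sum.elim (fun a => if a = v then (k : ℤ) + 1 else 0) (fun _ => (1 : ℤ)))
        (fun w => if w = Sum.inr u then (k : ℤ) + n + 1 else 0)) ∧
    (attachComplete G' v k n).LinEquiv
      (fun w => ((k : ℤ) + 1) *
        Sum.elim (fun a => if a = v then (k : ℤ) + 1 else 0) (fun _ => (1 : ℤ)) w)
      (fun w => if w = Sum.inl v then ((k : ℤ) + n + 1) * ((k : ℤ) + 1) else 0) :=
  stmt12_general G' v k n
end
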